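/- Let n = 1 and let g : ℝ → ℝ be a smooth function. Define u(x,t) = (e^{-t/2}/2) ∫_{x-t}^{x+t} I_0((1/2)√(t² − (x−y)²)) g(y) dy for t > 0. Then u is smooth on ℝ × (0,∞), satisfies the damped wave equation ∂²u/∂t² − ∂²u/∂x² + ∂u/∂t = 0 on ℝ × (0,∞), and for every x ∈ ℝ one has u(x,t) → 0 and ∂u/∂t(x,t) → g(x) as t → 0⁺. -/

import Mathlib

open Real Set Filter MeasureTheory
open scoped Nat Topology

noncomputable section

/-- The modified Bessel function of integer order `ν`:
`I_ν(s) = Σ_{j=0}^∞ (1/(j! (j+ν)!)) (s/2)^{2j+ν}` (note `Γ(j+ν+1) = (j+ν)!`). -/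
def besselI (ν : ℕ) (s : ℝ) : ℝ :=
  ∑' j : ℕ, (1 / ((j ! : ℝ) * ((j + ν)! : ℝ))) * (s / 2) ^ (2 * j + ν)

/-!
Write `a = x - t`, `b = x + t`. Then `t² - (x - y)² = (b - y)(y - a)`, and the function to study is
`W(a, b) = ∫_a^b f((b - y)(y - a)) g(y) dy` with `f(s) = I₀(√s / 2) / 2`, an entire function of `s`.
Since `∂_t² - ∂_x² = -4 ∂_a ∂_b`, only the mixed derivative of `W` matters. Differentiating in `b`
gives `∂_b W = ∫_a^b (y - a) f'((b - y)(y - a)) g(y) dy + f(0) g(b)`; in the next derivative, in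
`a`, the factor `y - a` kills the boundary term, and the integrand becomes
`-(f' + s f'')((b - y)(y - a)) g(y)`. Bessel's equation for `I₀` reads `f' + s f'' = f / 16`, so
`∂_a ∂_b W = -W / 16`. Thus `v(x, t) = W(x - t, x + t)` solves `v_tt - v_xx = v / 4`, and
multiplying by `exp (-t / 2)` turns this into the damped wave equation. As `g` is never
differentiated here and `W(a, b) = -W(b, a)`, the gradient of `W` is as smooth as `g`, so `v` gains
one derivative on `g`; the initial values are read off at `a = b`.
-/

section ParametricIntegral

variable {E F : Type*} [NormedAddCommGroup E] [NormedSpace ℝ E]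
  [NormedAddCommGroup F] [NormedSpace ℝ F]

lemma hasFDerivAt_intervalIntegral_of_continuous {K : E → ℝ → F} {K' : E → ℝ → E →L[ℝ] F}
    (hK : ∀ p, Continuous (K p)) (hK' : Continuous fun q : E × ℝ => K' q.1 q.2)
    (hdK : ∀ p y, HasFDerivAt (K · y) (K' p y) p) (a b : ℝ) (p : E) :
    HasFDerivAt (fun p => ∫ y in a..b, K p y) (∫ y in a..b, K' p y) p := by
  have hK'p : Continuous (K' p) := hK'.comp (by fun_prop : Continuous fun y : ℝ => (p, y))
  obtain ⟨C, hC⟩ := isCompact_uIcc.exists_bound_of_continuousOn (s := uIcc a b) hK'p.continuousOn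
  have hbound : ∀ᶠ q in 𝓝 p, ∀ y ∈ uIcc a b, ‖K' q y‖ < C + 1 :=
    isCompact_uIcc.eventually_forall_of_forall_eventually fun y hy =>
      hK'.norm.continuousAt.eventually_lt_const ((hC y hy).trans_lt (lt_add_one C))
  exact intervalIntegral.hasFDerivAt_integral_of_dominated_of_fderiv_le hbound
    (.of_forall fun q => (hK q).aestronglyMeasurable) ((hK p).intervalIntegrable _ _)
    hK'p.aestronglyMeasurable
    (ae_of_all _ fun y hy q hq => (hq y (uIoc_subset_uIcc hy)).le) intervalIntegrable_const
    (ae_of_all _ fun y _ q _ => hdK q y)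

variable [CompleteSpace F]

lemma hasFDerivAt_intervalIntegral_upper {K : E → ℝ → F} {K' : E → ℝ → E →L[ℝ] F}
    (hK : Continuous fun q : E × ℝ => K q.1 q.2) (hK' : Continuous fun q : E × ℝ => K' q.1 q.2)
    (hdK : ∀ p y, HasFDerivAt (K · y) (K' p y) p) (c : ℝ) {b : E → ℝ} {b' : E →L[ℝ] ℝ} {p : E}
    (hb : HasFDerivAt b b' p) :
    HasFDerivAt (fun p => ∫ y in c..b p, K p y)
      ((∫ y in c..b p, K' p y) + b'.smulRight (K p (b p))) p := by
  have hKc (p : E) : Continuous (K p) := hK.comp (by fun_prop : Continuous fun y : ℝ => (p, y))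
  have hpartial := (hasStrictFDerivAt_uncurry_coprod (u := (p, b p))
    (f := fun p s => ∫ y in c..s, K p y) (f₁ := fun p s => ∫ y in c..s, K' p y)
    (f₂ := fun p s => .toSpanSingleton ℝ (K p s))
    (.of_forall fun v => hasFDerivAt_intervalIntegral_of_continuous hKc hK' hdK c v.2 v.1)
    (.of_forall fun v => ((hKc v.1).integral_hasStrictDerivAt c v.2).hasDerivAt.hasFDerivAt)
    (intervalIntegral.continuous_parametric_primitive_of_continuous hK').continuousAt
    ((ContinuousLinearMap.toSpanSingletonCLE).continuous.comp hK).continuousAt).hasFDerivAt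
  refine (hpartial.comp p ((hasFDerivAt_id p).prodMk hb)).congr_fderiv ?_
  ext v
  simp [Function.HasUncurry.uncurry]

lemma hasFDerivAt_intervalIntegral {K : E → ℝ → F} {K' : E → ℝ → E →L[ℝ] F}
    (hK : Continuous fun q : E × ℝ => K q.1 q.2) (hK' : Continuous fun q : E × ℝ => K' q.1 q.2)
    (hdK : ∀ p y, HasFDerivAt (K · y) (K' p y) p) {a b : E → ℝ} {a' b' : E →L[ℝ] ℝ} {p : E}
    (ha : HasFDerivAt a a' p) (hb : HasFDerivAt b b' p) :
    HasFDerivAt (fun p => ∫ y in a p..b p, K p y)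
      ((∫ y in a p..b p, K' p y) + b'.smulRight (K p (b p)) - a'.smulRight (K p (a p))) p := by
  have hKi (p : E) (c d : ℝ) : IntervalIntegrable (K p) volume c d :=
    (hK.comp (by fun_prop : Continuous fun y : ℝ => (p, y))).intervalIntegrable c d
  have hK'i (c d : ℝ) : IntervalIntegrable (K' p) volume c d :=
    (hK'.comp (by fun_prop : Continuous fun y : ℝ => (p, y))).intervalIntegrable c d
  refine (((hasFDerivAt_intervalIntegral_upper hK hK' hdK 0 hb).sub
    (hasFDerivAt_intervalIntegral_upper hK hK' hdK 0 ha)).congr_of_eventuallyEq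
      (.of_forall fun q => ?_)).congr_fderiv ?_
  · exact (intervalIntegral.integral_interval_sub_left (hKi q 0 (b q)) (hKi q 0 (a q))).symm
  · rw [← intervalIntegral.integral_interval_sub_left (hK'i 0 (b p)) (hK'i 0 (a p))]
    abel

lemma hasDerivAt_intervalIntegral {K K' : ℝ → ℝ → F} (hK : Continuous fun q : ℝ × ℝ => K q.1 q.2)
    (hK' : Continuous fun q : ℝ × ℝ => K' q.1 q.2)
    (hdK : ∀ p y, HasDerivAt (K · y) (K' p y) p) {a b : ℝ → ℝ} {a' b' p : ℝ}
    (ha : HasDerivAt a a' p) (hb : HasDerivAt b b' p) :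
    HasDerivAt (fun p => ∫ y in a p..b p, K p y)
      ((∫ y in a p..b p, K' p y) + b' • K p (b p) - a' • K p (a p)) p := by
  have hcont : Continuous fun q : ℝ × ℝ => ContinuousLinearMap.toSpanSingleton ℝ (K' q.1 q.2) :=
    ContinuousLinearMap.toSpanSingletonCLE.continuous.comp hK'
  refine (hasFDerivAt_intervalIntegral hK hcont (fun p y => (hdK p y).hasFDerivAt)
    ha.hasFDerivAt hb.hasFDerivAt).hasDerivAt.congr_deriv ?_
  have hint : IntervalIntegrable (fun y => ContinuousLinearMap.toSpanSingleton ℝ (K' p y))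
      volume (a p) (b p) :=
    (hcont.comp (by fun_prop : Continuous fun y : ℝ => (p, y))).intervalIntegrable _ _
  simp [ContinuousLinearMap.intervalIntegral_apply hint]

end ParametricIntegral

section ContDiffParametricIntegral

universe u

-- One universe for both spaces: the induction below replaces `F` by `E →L[ℝ] F`.
variable {E F : Type u} [NormedAddCommGroup E] [NormedSpace ℝ E]
  [NormedAddCommGroup F] [NormedSpace ℝ F] [CompleteSpace F]

lemma contDiff_intervalIntegral_upper {n : ℕ∞} {K : E → ℝ → F}
    (hK : ContDiff ℝ n fun q : E × ℝ => K q.1 q.2) (c : ℝ) {b : E → ℝ} (hb : ContDiff ℝ n b) :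
    ContDiff ℝ n fun p => ∫ y in c..b p, K p y := by
  induction n using ENat.nat_induction generalizing F with
  | zero =>
    exact contDiff_zero.2 <| intervalIntegral.continuous_parametric_intervalIntegral_of_continuous
      hK.continuous hb.continuous
  | succ n ih =>
    push_cast at hK hb ⊢
    let K' (p : E) (y : ℝ) : E →L[ℝ] F :=
      (fderiv ℝ (fun q : E × ℝ => K q.1 q.2) (p, y)).comp (.inl ℝ E ℝ)
    have hK' : ContDiff ℝ n fun q : E × ℝ => K' q.1 q.2 :=
      (hK.fderiv_right le_rfl).clm_comp contDiff_const
    have hdK (p : E) (y : ℝ) : HasFDerivAt (K · y) (K' p y) p := by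
      have hcomp := HasFDerivAt.comp (f := fun p : E => (p, y)) p
        (hK.differentiable (by simp) (p, y)).hasFDerivAt (hasFDerivAt_prodMk_left p y)
      exact hcomp
    have hd (p : E) := hasFDerivAt_intervalIntegral_upper hK.continuous hK'.continuous hdK c
      (hb.differentiable (by simp) p).hasFDerivAt
    rw [contDiff_succ_iff_fderiv]
    refine ⟨fun p => (hd p).differentiableAt, by simp, ?_⟩
    rw [funext fun p => (hd p).fderiv]
    have hKb : ContDiff ℝ n fun p => K p (b p) :=
      (hK.comp (contDiff_id.prodMk hb)).of_succ
    exact (ih hK' hb.of_succ).add ((hb.fderiv_right le_rfl).smulRight hKb)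
  | top ih =>
    exact contDiff_infty.2 fun n => ih n (hK.of_le (mod_cast le_top)) (hb.of_le (mod_cast le_top))

lemma contDiff_intervalIntegral {n : ℕ∞} {K : E → ℝ → F} {a b : E → ℝ}
    (hK : ContDiff ℝ n fun q : E × ℝ => K q.1 q.2) (ha : ContDiff ℝ n a) (hb : ContDiff ℝ n b) :
    ContDiff ℝ n fun p => ∫ y in a p..b p, K p y := by
  have hKi (p : E) (c d : ℝ) : IntervalIntegrable (K p) volume c d :=
    (hK.continuous.comp (by fun_prop : Continuous fun y : ℝ => (p, y))).intervalIntegrable c d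
  simp only [← fun p => intervalIntegral.integral_interval_sub_left (hKi p 0 (b p)) (hKi p 0 (a p))]
  exact (contDiff_intervalIntegral_upper hK 0 hb).sub (contDiff_intervalIntegral_upper hK 0 ha)

end ContDiffParametricIntegral

lemma hasDerivAt_comp₂ {F : ℝ → ℝ → ℝ} {α β : ℝ → ℝ} {r s α' β' t : ℝ}
    (hF : HasFDerivAt (fun p : ℝ × ℝ => F p.1 p.2) (r • .fst ℝ ℝ ℝ + s • .snd ℝ ℝ ℝ) (α t, β t))
    (hα : HasDerivAt α α' t) (hβ : HasDerivAt β β' t) :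
    HasDerivAt (fun t => F (α t) (β t)) (r * α' + s * β') t := by
  have h := hF.comp_hasDerivAt t (hα.prodMk hβ)
  exact h.congr_deriv (by simp)

/-- The Bessel–Clifford function `C_k(s) = Σ_j s^j / (j! (j+k)!)`, the entire function for which
`I_k(s) = (s/2)^k C_k(s²/4)`. -/
def besselClifford (k : ℕ) (s : ℝ) : ℝ :=
  ∑' j : ℕ, s ^ j / ((j ! : ℝ) * ((j + k)! : ℝ))

lemma summable_besselClifford (k : ℕ) (s : ℝ) :
    Summable fun j : ℕ => s ^ j / ((j ! : ℝ) * ((j + k)! : ℝ)) := by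
  refine .of_norm_bounded (Real.summable_pow_div_factorial |s|) fun j => ?_
  have h : (1 : ℝ) ≤ ((j + k)! : ℝ) := by exact_mod_cast (j + k).factorial_pos
  simp only [norm_div, norm_pow, norm_mul, Real.norm_eq_abs, Nat.abs_cast]
  gcongr
  exact le_mul_of_one_le_right (by positivity) h

lemma hasDerivAt_besselClifford (k : ℕ) (s : ℝ) :
    HasDerivAt (besselClifford k) (besselClifford (k + 1) s) s := by
  let g' (j : ℕ) (y : ℝ) : ℝ := j * y ^ (j - 1) / ((j ! : ℝ) * ((j + k)! : ℝ))
  have hshift (j : ℕ) (y : ℝ) :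
      g' (j + 1) y = y ^ j / ((j ! : ℝ) * ((j + (k + 1))! : ℝ)) := by
    simp only [g', add_tsub_cancel_right]
    rw [Nat.factorial_succ, add_right_comm, add_assoc, Nat.cast_mul, mul_assoc,
      mul_div_mul_left _ _ (by positivity)]
  have hsummable (y : ℝ) : Summable (g' · y) := by
    rw [← summable_nat_add_iff 1]
    simpa only [hshift] using summable_besselClifford (k + 1) y
  have htsum : ∑' j, g' j s = besselClifford (k + 1) s := by
    rw [(hsummable s).tsum_eq_zero_add, besselClifford]
    simp only [hshift]
    simp [g']
  have hbound (j : ℕ) (y : ℝ) (hy : y ∈ Metric.ball 0 (|s| + 1)) : ‖g' j y‖ ≤ g' j (|s| + 1) := by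
    have hy' : |y| ≤ |s| + 1 := (mem_ball_zero_iff.1 hy).le
    simp only [g', norm_div, norm_mul, norm_pow, Real.norm_eq_abs, Nat.abs_cast]
    gcongr
  have hs : s ∈ Metric.ball 0 (|s| + 1) := by simp
  rw [← htsum]
  exact hasDerivAt_tsum_of_isPreconnected (hsummable (|s| + 1)) Metric.isOpen_ball
    (convex_ball _ _).isPreconnected (fun j y _ => (hasDerivAt_pow j y).div_const _) hbound hs
    (summable_besselClifford k s) hs

lemma deriv_besselClifford (k : ℕ) : deriv (besselClifford k) = besselClifford (k + 1) :=
  funext fun s => (hasDerivAt_besselClifford k s).deriv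

lemma contDiff_besselClifford (k : ℕ) {n : ℕ∞} : ContDiff ℝ n (besselClifford k) := by
  induction n using ENat.nat_induction generalizing k with
  | zero =>
    exact contDiff_zero.2 (continuous_iff_continuousAt.2 fun s =>
      (hasDerivAt_besselClifford k s).continuousAt)
  | succ n ih =>
    push_cast
    rw [contDiff_succ_iff_deriv, deriv_besselClifford]
    exact ⟨fun s => (hasDerivAt_besselClifford k s).differentiableAt, by simp, ih (k + 1)⟩
  | top ih => exact contDiff_infty.2 (ih · k)

lemma besselClifford_apply_zero (k : ℕ) : besselClifford k 0 = (k ! : ℝ)⁻¹ := by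
  rw [besselClifford, tsum_eq_single 0 fun j hj => by simp [hj]]
  simp

lemma besselClifford_recurrence (k : ℕ) (s : ℝ) :
    (k + 1) * besselClifford (k + 1) s + s * besselClifford (k + 2) s = besselClifford k s := by
  have h₀ := summable_besselClifford k s
  have h₁ := (summable_besselClifford (k + 1) s).mul_left ((k : ℝ) + 1)
  have h₂ := (summable_besselClifford (k + 2) s).mul_left s
  have hzero : ((k : ℝ) + 1) * (s ^ 0 / ((0 ! : ℝ) * ((0 + (k + 1))! : ℝ)))
      = s ^ 0 / ((0 ! : ℝ) * ((0 + k)! : ℝ)) := by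
    simp only [zero_add, Nat.factorial_succ, Nat.cast_mul, Nat.cast_succ]
    field_simp
  have hsucc (j : ℕ) : ((k : ℝ) + 1) * (s ^ (j + 1) / (((j + 1)! : ℝ) * ((j + 1 + (k + 1))! : ℝ)))
        + s * (s ^ j / ((j ! : ℝ) * ((j + (k + 2))! : ℝ)))
      = s ^ (j + 1) / (((j + 1)! : ℝ) * ((j + 1 + k)! : ℝ)) := by
    rw [show j + 1 + (k + 1) = j + 1 + k + 1 by ring, show j + (k + 2) = j + 1 + k + 1 by ring,
      Nat.factorial_succ (j + 1 + k), Nat.factorial_succ j]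
    push_cast
    field_simp
    ring
  simp only [besselClifford]
  rw [← tsum_mul_left, ← tsum_mul_left, h₁.tsum_eq_zero_add, add_assoc,
    ← ((summable_nat_add_iff 1).2 h₁).tsum_add h₂, h₀.tsum_eq_zero_add, hzero, tsum_congr hsucc]

lemma besselI_eq_pow_mul_besselClifford (k : ℕ) (s : ℝ) :
    besselI k s = (s / 2) ^ k * besselClifford k (s ^ 2 / 4) := by
  rw [besselI, besselClifford, ← tsum_mul_left]
  refine tsum_congr fun j => ?_
  rw [show s ^ 2 / 4 = (s / 2) ^ 2 by ring, ← pow_mul, pow_add]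
  ring

section CharacteristicIntegral

/-- The integral `∫_a^b f((b-y)(y-a)) g(y) dy`. In the characteristic coordinates `a = x - t`,
`b = x + t` one has `(b-y)(y-a) = t² - (x-y)²`, so that it superposes over `y` a kernel
depending only on the Lorentzian distance from `(x, t)` to `(y, 0)`. -/
def characteristicIntegral (f g : ℝ → ℝ) (a b : ℝ) : ℝ :=
  ∫ y in a..b, f ((b - y) * (y - a)) * g y

/-- The partial derivative of `characteristicIntegral f g a b` in `b`. -/
def characteristicIntegralDeriv (f g : ℝ → ℝ) (a b : ℝ) : ℝ :=
  (∫ y in a..b, (y - a) * deriv f ((b - y) * (y - a)) * g y) + f 0 * g b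

variable {f g : ℝ → ℝ}

lemma characteristicIntegral_swap (f g : ℝ → ℝ) (a b : ℝ) :
    characteristicIntegral f g b a = -characteristicIntegral f g a b := by
  rw [characteristicIntegral, characteristicIntegral, intervalIntegral.integral_symm]
  simp only [show ∀ y, (a - y) * (y - b) = (b - y) * (y - a) by intro y; ring]

lemma hasDerivAt_characteristicIntegral_right (hf : ContDiff ℝ 1 f) (hg : Continuous g) (a b : ℝ) :
    HasDerivAt (characteristicIntegral f g a) (characteristicIntegralDeriv f g a b) b := by
  have : Continuous (deriv f) := hf.continuous_deriv_one
  have hf_cont := hf.continuous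
  have hkernel (b y : ℝ) : HasDerivAt (fun b => f ((b - y) * (y - a)) * g y)
      ((y - a) * deriv f ((b - y) * (y - a)) * g y) b := by
    have hprod := ((hasDerivAt_id' b).sub_const y).mul_const (y - a)
    exact (((hf.differentiable one_ne_zero _).hasDerivAt.comp b hprod).mul_const (g y)).congr_deriv
      (by ring)
  refine (hasDerivAt_intervalIntegral (by fun_prop) (by fun_prop) hkernel
    (hasDerivAt_const b a) (hasDerivAt_id b)).congr_deriv ?_
  simp [characteristicIntegralDeriv]

lemma hasDerivAt_characteristicIntegral_left (hf : ContDiff ℝ 1 f) (hg : Continuous g) (a b : ℝ) :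
    HasDerivAt (characteristicIntegral f g · b) (-characteristicIntegralDeriv f g b a) a := by
  simp only [characteristicIntegral_swap f g b]
  exact (hasDerivAt_characteristicIntegral_right hf hg b a).fun_neg

lemma hasDerivAt_characteristicIntegralDeriv_left {c : ℝ} (hf : ContDiff ℝ 2 f) (hg : Continuous g)
    (hode : ∀ s, deriv f s + s * deriv (deriv f) s = c * f s) (a b : ℝ) :
    HasDerivAt (characteristicIntegralDeriv f g · b) (-c * characteristicIntegral f g a b) a := by
  have hf' : ContDiff ℝ 1 (deriv f) := hf.deriv'
  have hf'_cont := hf'.continuous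
  have hf_cont := hf.continuous
  have hkernel (a y : ℝ) : HasDerivAt (fun a => (y - a) * deriv f ((b - y) * (y - a)) * g y)
      (-c * (f ((b - y) * (y - a)) * g y)) a := by
    have hsub := (hasDerivAt_id' a).const_sub y
    have hcomp := (hf'.differentiable one_ne_zero _).hasDerivAt.comp a (hsub.const_mul (b - y))
    refine ((hsub.mul hcomp).mul_const (g y)).congr_deriv ?_
    simp only [Function.comp_apply]
    linear_combination -g y * hode ((b - y) * (y - a))
  refine ((hasDerivAt_intervalIntegral (by fun_prop) (by fun_prop) hkernel
    (hasDerivAt_id a) (hasDerivAt_const a b)).add_const (f 0 * g b)).congr_deriv ?_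
  simp [characteristicIntegral]

lemma contDiff_characteristicIntegralDeriv {n : ℕ∞} (hf : ContDiff ℝ (n + 1) f)
    (hg : ContDiff ℝ n g) :
    ContDiff ℝ n fun p : ℝ × ℝ => characteristicIntegralDeriv f g p.1 p.2 := by
  have : ContDiff ℝ n (deriv f) := hf.deriv'
  refine (contDiff_intervalIntegral (K := fun (p : ℝ × ℝ) y =>
    (y - p.1) * deriv f ((p.2 - y) * (y - p.1)) * g y) ?_ contDiff_fst contDiff_snd).add ?_
  all_goals fun_prop

lemma hasFDerivAt_characteristicIntegral (hf : ContDiff ℝ 1 f) (hg : Continuous g) (p : ℝ × ℝ) :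
    HasFDerivAt (fun p : ℝ × ℝ => characteristicIntegral f g p.1 p.2)
      (-characteristicIntegralDeriv f g p.2 p.1 • .fst ℝ ℝ ℝ
        + characteristicIntegralDeriv f g p.1 p.2 • .snd ℝ ℝ ℝ) p := by
  have hcont : Continuous fun p : ℝ × ℝ => characteristicIntegralDeriv f g p.1 p.2 :=
    (contDiff_characteristicIntegralDeriv (n := 0) (by simpa) (contDiff_zero.2 hg)).continuous
  refine (hasStrictFDerivAt_uncurry_coprod (f := characteristicIntegral f g)
    (f₁ := fun a b => .toSpanSingleton ℝ (-characteristicIntegralDeriv f g b a))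
    (f₂ := fun a b => .toSpanSingleton ℝ (characteristicIntegralDeriv f g a b))
    (.of_forall fun q => (hasDerivAt_characteristicIntegral_left hf hg q.1 q.2).hasFDerivAt)
    (.of_forall fun q => (hasDerivAt_characteristicIntegral_right hf hg q.1 q.2).hasFDerivAt)
    (ContinuousLinearMap.toSpanSingletonCLE.continuous.comp
      (hcont.comp continuous_swap).neg).continuousAt
    (ContinuousLinearMap.toSpanSingletonCLE.continuous.comp
      hcont).continuousAt).hasFDerivAt.congr_fderiv ?_
  ext <;> simp [Function.HasUncurry.uncurry]

lemma hasFDerivAt_characteristicIntegralDeriv {c : ℝ} (hf : ContDiff ℝ 2 f) (hg : ContDiff ℝ 1 g)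
    (hode : ∀ s, deriv f s + s * deriv (deriv f) s = c * f s) (a b : ℝ) :
    HasFDerivAt (fun p : ℝ × ℝ => characteristicIntegralDeriv f g p.1 p.2)
      ((-c * characteristicIntegral f g a b) • .fst ℝ ℝ ℝ
        + deriv (characteristicIntegralDeriv f g a) b • .snd ℝ ℝ ℝ) (a, b) := by
  have hd := ((contDiff_characteristicIntegralDeriv (n := 1) hf hg).differentiable one_ne_zero
    (a, b)).hasFDerivAt
  have hleft := hd.comp_hasDerivAt a ((hasDerivAt_id a).prodMk (hasDerivAt_const a b))
  have hright : HasDerivAt (characteristicIntegralDeriv f g a) _ b :=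
    hd.comp_hasDerivAt b ((hasDerivAt_const b a).prodMk (hasDerivAt_id b))
  refine hd.congr_fderiv ?_
  ext
  · simpa using hleft.unique
      (hasDerivAt_characteristicIntegralDeriv_left hf hg.continuous hode a b)
  · simpa using hright.deriv.symm

lemma contDiff_characteristicIntegral {n : ℕ∞} (hf : ContDiff ℝ (n + 1) f) (hg : ContDiff ℝ n g) :
    ContDiff ℝ (n + 1) fun p : ℝ × ℝ => characteristicIntegral f g p.1 p.2 := by
  have hderiv := hasFDerivAt_characteristicIntegral (hf.of_le (by simp)) hg.continuous
  have hcontDiff := contDiff_characteristicIntegralDeriv hf hg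
  rw [contDiff_succ_iff_fderiv, funext fun p => (hderiv p).fderiv]
  refine ⟨fun p => (hderiv p).differentiableAt, by simp, ?_⟩
  exact ((hcontDiff.comp (contDiff_snd.prodMk contDiff_fst)).neg.smul contDiff_const).add
    (hcontDiff.smul contDiff_const)

end CharacteristicIntegral

section KleinGordon

/-- The solution of `v_tt - v_xx = 4 c v` with Cauchy data `v = 0`, `v_t = 2 f(0) g`, where the
kernel `f` is subject to `f'(s) + s f''(s) = c f(s)`. -/
def kleinGordonSolution (f g : ℝ → ℝ) (x t : ℝ) : ℝ :=
  characteristicIntegral f g (x - t) (x + t)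

variable {f g : ℝ → ℝ}

lemma kleinGordonSolution_apply (f g : ℝ → ℝ) (x t : ℝ) :
    kleinGordonSolution f g x t = ∫ y in x - t..x + t, f (t ^ 2 - (x - y) ^ 2) * g y := by
  simp only [kleinGordonSolution, characteristicIntegral,
    show ∀ y, (x + t - y) * (y - (x - t)) = t ^ 2 - (x - y) ^ 2 by intro y; ring]

lemma kleinGordonSolution_zero (f g : ℝ → ℝ) (x : ℝ) : kleinGordonSolution f g x 0 = 0 := by
  simp [kleinGordonSolution, characteristicIntegral]

lemma contDiff_kleinGordonSolution {n : ℕ∞} (hf : ContDiff ℝ (n + 1) f) (hg : ContDiff ℝ n g) :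
    ContDiff ℝ (n + 1) fun p : ℝ × ℝ => kleinGordonSolution f g p.1 p.2 :=
  (contDiff_characteristicIntegral hf hg).comp
    ((contDiff_fst.sub contDiff_snd).prodMk (contDiff_fst.add contDiff_snd))

lemma hasDerivAt_kleinGordonSolution_time (hf : ContDiff ℝ 1 f) (hg : Continuous g) (x t : ℝ) :
    HasDerivAt (kleinGordonSolution f g x) (characteristicIntegralDeriv f g (x - t) (x + t)
      + characteristicIntegralDeriv f g (x + t) (x - t)) t :=
  (hasDerivAt_comp₂ (hasFDerivAt_characteristicIntegral hf hg _)
    ((hasDerivAt_id' t).const_sub x) ((hasDerivAt_id' t).const_add x)).congr_deriv (by ring)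

lemma hasDerivAt_kleinGordonSolution_space (hf : ContDiff ℝ 1 f) (hg : Continuous g) (x t : ℝ) :
    HasDerivAt (kleinGordonSolution f g · t) (characteristicIntegralDeriv f g (x - t) (x + t)
      - characteristicIntegralDeriv f g (x + t) (x - t)) x :=
  (hasDerivAt_comp₂ (hasFDerivAt_characteristicIntegral hf hg _)
    ((hasDerivAt_id' x).sub_const t) ((hasDerivAt_id' x).add_const t)).congr_deriv (by ring)

lemma deriv_kleinGordonSolution_time_zero (hf : ContDiff ℝ 1 f) (hg : Continuous g) (x : ℝ) :
    deriv (kleinGordonSolution f g x) 0 = 2 * f 0 * g x := by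
  rw [(hasDerivAt_kleinGordonSolution_time hf hg x 0).deriv]
  simp only [sub_zero, add_zero, characteristicIntegralDeriv, intervalIntegral.integral_same]
  ring

lemma kleinGordonSolution_equation {c : ℝ} (hf : ContDiff ℝ 2 f) (hg : ContDiff ℝ 1 g)
    (hode : ∀ s, deriv f s + s * deriv (deriv f) s = c * f s) (x t : ℝ) :
    deriv (deriv (kleinGordonSolution f g x)) t - deriv (deriv (kleinGordonSolution f g · t)) x
      = 4 * c * kleinGordonSolution f g x t := by
  have hf₁ : ContDiff ℝ 1 f := hf.of_le one_le_two
  have hD := hasFDerivAt_characteristicIntegralDeriv hf hg hode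
  have htime := (hasDerivAt_comp₂ (hD (x - t) (x + t))
      ((hasDerivAt_id' t).const_sub x) ((hasDerivAt_id' t).const_add x)).fun_add
    (hasDerivAt_comp₂ (hD (x + t) (x - t))
      ((hasDerivAt_id' t).const_add x) ((hasDerivAt_id' t).const_sub x))
  have hspace := (hasDerivAt_comp₂ (α := (· - t)) (β := (· + t)) (hD _ _)
      ((hasDerivAt_id' x).sub_const t) ((hasDerivAt_id' x).add_const t)).fun_sub
    (hasDerivAt_comp₂ (α := (· + t)) (β := (· - t)) (hD _ _)
      ((hasDerivAt_id' x).add_const t) ((hasDerivAt_id' x).sub_const t))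
  rw [funext fun t => (hasDerivAt_kleinGordonSolution_time hf₁ hg.continuous x t).deriv,
    funext fun x => (hasDerivAt_kleinGordonSolution_space hf₁ hg.continuous x t).deriv,
    htime.deriv, hspace.deriv, characteristicIntegral_swap f g (x - t) (x + t),
    kleinGordonSolution]
  ring

end KleinGordon

section DampedWave

lemma deriv_exp_mul {h : ℝ → ℝ} (hh : Differentiable ℝ h) (k : ℝ) :
    deriv (fun t => exp (k * t) * h t) = fun t => exp (k * t) * (deriv h t + k * h t) := by
  ext t
  have hexp := ((hasDerivAt_id' t).const_mul k).exp
  rw [(hexp.fun_mul (hh t).hasDerivAt).deriv]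
  ring

lemma deriv_deriv_exp_mul {h : ℝ → ℝ} (hh : ContDiff ℝ 2 h) (k : ℝ) :
    deriv (deriv fun t => exp (k * t) * h t) = fun t =>
      exp (k * t) * (deriv (deriv h) t + 2 * k * deriv h t + k ^ 2 * h t) := by
  have hh₀ : Differentiable ℝ h := hh.differentiable two_ne_zero
  have hh₁ : Differentiable ℝ (deriv h) := hh.differentiable_deriv_two
  rw [deriv_exp_mul hh₀, deriv_exp_mul (hh₁.fun_add (hh₀.const_mul k))]
  ext t
  rw [deriv_fun_add (hh₁ t) ((hh₀ t).const_mul k), deriv_const_mul _ (hh₀ t)]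
  ring

lemma damped_wave_equation_exp_mul {v : ℝ → ℝ → ℝ} {k x t : ℝ} (hv : ContDiff ℝ 2 (v x))
    (hkg : deriv (deriv (v x)) t - deriv (deriv (v · t)) x = k ^ 2 * v x t) :
    deriv (deriv fun t => exp (k * t) * v x t) t - deriv (deriv fun x => exp (k * t) * v x t) x
      - 2 * k * deriv (fun t => exp (k * t) * v x t) t = 0 := by
  rw [deriv_deriv_exp_mul hv, deriv_exp_mul (hv.differentiable two_ne_zero)]
  simp only [deriv_const_mul_field']
  linear_combination exp (k * t) * hkg

/-- The kernel of the damped wave equation as a function of `s = t² - (x-y)²`; for `s ≥ 0` it is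
`I_0(√s / 2) / 2`. -/
def dampedWaveKernel (s : ℝ) : ℝ := besselClifford 0 (s / 16) / 2

lemma contDiff_dampedWaveKernel {n : ℕ∞} : ContDiff ℝ n dampedWaveKernel :=
  ((contDiff_besselClifford 0).comp (contDiff_id.div_const 16)).div_const 2

lemma dampedWaveKernel_zero : dampedWaveKernel 0 = 1 / 2 := by
  simp [dampedWaveKernel, besselClifford_apply_zero]

lemma dampedWaveKernel_eq_besselI {s : ℝ} (hs : 0 ≤ s) :
    dampedWaveKernel s = besselI 0 (1 / 2 * √s) / 2 := by
  rw [dampedWaveKernel, besselI_eq_pow_mul_besselClifford, mul_pow, sq_sqrt hs, pow_zero, one_mul]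
  ring_nf

lemma dampedWaveKernel_ode (s : ℝ) :
    deriv dampedWaveKernel s + s * deriv (deriv dampedWaveKernel) s
      = 1 / 16 * dampedWaveKernel s := by
  have hderiv (k : ℕ) (r s : ℝ) : HasDerivAt (fun s => besselClifford k (s / 16) / r)
      (besselClifford (k + 1) (s / 16) / (16 * r)) s := by
    have h := ((hasDerivAt_besselClifford k (s / 16)).comp s
      ((hasDerivAt_id' s).div_const 16)).div_const r
    exact h.congr_deriv (by ring)
  rw [show deriv dampedWaveKernel = _ from funext fun s => (hderiv 0 2 s).deriv,
    (hderiv (0 + 1) (16 * 2) s).deriv, dampedWaveKernel, ← besselClifford_recurrence 0 (s / 16)]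
  push_cast
  ring

/-- The solution of the damped wave equation with Cauchy data `(0, g)`, defined for all times. -/
def dampedWaveSolution (g : ℝ → ℝ) (x t : ℝ) : ℝ :=
  exp (-(1 / 2) * t) * kleinGordonSolution dampedWaveKernel g x t

lemma dampedWaveSolution_eq_integral_besselI (g : ℝ → ℝ) (x : ℝ) {t : ℝ} (ht : 0 ≤ t) :
    dampedWaveSolution g x t = exp (-t / 2) / 2 *
      ∫ y in (x - t)..(x + t), besselI 0 (1 / 2 * √(t ^ 2 - (x - y) ^ 2)) * g y := by
  have hkernel : ∀ y ∈ uIcc (x - t) (x + t), dampedWaveKernel (t ^ 2 - (x - y) ^ 2) * g y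
      = 1 / 2 * (besselI 0 (1 / 2 * √(t ^ 2 - (x - y) ^ 2)) * g y) := by
    intro y hy
    rw [uIcc_of_le (by linarith)] at hy
    rw [dampedWaveKernel_eq_besselI (by nlinarith [hy.1, hy.2])]
    ring
  rw [dampedWaveSolution, kleinGordonSolution_apply, intervalIntegral.integral_congr hkernel,
    intervalIntegral.integral_const_mul]
  ring_nf

lemma dampedWaveSolution_zero (g : ℝ → ℝ) (x : ℝ) : dampedWaveSolution g x 0 = 0 := by
  simp [dampedWaveSolution, kleinGordonSolution_zero]

variable {g : ℝ → ℝ}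

lemma contDiff_dampedWaveSolution {n : ℕ∞} (hg : ContDiff ℝ n g) :
    ContDiff ℝ (n + 1) fun p : ℝ × ℝ => dampedWaveSolution g p.1 p.2 :=
  (contDiff_const.mul contDiff_snd).exp.mul
    (contDiff_kleinGordonSolution (contDiff_dampedWaveKernel (n := n + 1)) hg)

lemma deriv_dampedWaveSolution_time_zero (hg : Continuous g) (x : ℝ) :
    deriv (dampedWaveSolution g x) 0 = g x := by
  have hf : ContDiff ℝ 1 dampedWaveKernel := contDiff_dampedWaveKernel (n := 1)
  have hdiff : Differentiable ℝ (kleinGordonSolution dampedWaveKernel g x) := fun t =>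
    (hasDerivAt_kleinGordonSolution_time hf hg x t).differentiableAt
  refine (congrFun (deriv_exp_mul hdiff (-(1 / 2))) 0).trans ?_
  simp [deriv_kleinGordonSolution_time_zero hf hg, kleinGordonSolution_zero, dampedWaveKernel_zero]

lemma dampedWaveSolution_equation (hg : ContDiff ℝ 1 g) (x t : ℝ) :
    deriv (deriv (dampedWaveSolution g x)) t - deriv (deriv (dampedWaveSolution g · t)) x
      + deriv (dampedWaveSolution g x) t = 0 := by
  have hf : ContDiff ℝ 2 dampedWaveKernel := contDiff_dampedWaveKernel (n := 2)
  have hv : ContDiff ℝ 2 (kleinGordonSolution dampedWaveKernel g x) :=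
    (contDiff_kleinGordonSolution (n := 1) hf hg).comp (f := fun t => (x, t))
      (contDiff_const.prodMk contDiff_id)
  have hkg := kleinGordonSolution_equation hf hg dampedWaveKernel_ode x t
  have h : deriv (deriv (dampedWaveSolution g x)) t - deriv (deriv (dampedWaveSolution g · t)) x
      - 2 * -(1 / 2) * deriv (dampedWaveSolution g x) t = 0 :=
    damped_wave_equation_exp_mul hv (hkg.trans (by ring))
  linear_combination h

end DampedWave

theorem damped_wave_solution_dim_one_general {n : ℕ∞} (hn : 1 ≤ n) (g : ℝ → ℝ)
    (hg : ContDiff ℝ n g) (u : ℝ → ℝ → ℝ)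
    (hu : ∀ x t : ℝ, 0 < t →
      u x t = (exp (-t / 2) / 2) *
        ∫ y in (x - t)..(x + t), besselI 0 ((1 / 2) * Real.sqrt (t ^ 2 - (x - y) ^ 2)) * g y) :
    ContDiffOn ℝ (n + 1) (fun p : ℝ × ℝ => u p.1 p.2) (univ ×ˢ Ioi 0) ∧
    (∀ x t : ℝ, 0 < t →
      deriv (deriv (fun s => u x s)) t - deriv (deriv (fun z => u z t)) x
        + deriv (fun s => u x s) t = 0) ∧
    (∀ x : ℝ,
      Tendsto (fun t => u x t) (𝓝[>] 0) (𝓝 0) ∧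
      Tendsto (fun t => deriv (fun s => u x s) t) (𝓝[>] 0) (𝓝 (g x))) := by
  have hg₁ : ContDiff ℝ 1 g := hg.of_le (mod_cast hn)
  have hu_eq {x t : ℝ} (ht : 0 < t) : u x t = dampedWaveSolution g x t :=
    (hu x t ht).trans (dampedWaveSolution_eq_integral_besselI g x ht.le).symm
  have hu_space {t : ℝ} (ht : 0 < t) : (u · t) = (dampedWaveSolution g · t) :=
    funext fun x => hu_eq ht
  have hu_time (x : ℝ) {t : ℝ} (ht : 0 < t) : u x =ᶠ[𝓝 t] dampedWaveSolution g x :=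
    (lt_mem_nhds ht).mono fun s hs => hu_eq hs
  have hcontDiff (x : ℝ) : ContDiff ℝ 1 (dampedWaveSolution g x) :=
    (contDiff_dampedWaveSolution (n := 0) (hg₁.of_le zero_le_one)).comp (f := fun t => (x, t))
      (contDiff_const.prodMk contDiff_id)
  refine ⟨(contDiff_dampedWaveSolution hg).contDiffOn.congr fun p hp => hu_eq hp.2,
    fun x t ht => ?_, fun x => ⟨?_, ?_⟩⟩
  · rw [hu_space ht, (hu_time x ht).deriv.deriv_eq, (hu_time x ht).deriv_eq]
    exact dampedWaveSolution_equation hg₁ x t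
  · have hlim := ((hcontDiff x).continuous.tendsto 0).mono_left (nhdsWithin_le_nhds (s := Ioi 0))
    rw [dampedWaveSolution_zero] at hlim
    exact hlim.congr' (eventually_mem_nhdsWithin.mono fun t ht => (hu_eq ht).symm)
  · have hlim := ((hcontDiff x).continuous_deriv_one.tendsto 0).mono_left
      (nhdsWithin_le_nhds (s := Ioi 0))
    rw [deriv_dampedWaveSolution_time_zero hg₁.continuous] at hlim
    exact hlim.congr' (eventually_mem_nhdsWithin.mono fun t ht => (hu_time x ht).deriv_eq.symm)

/-- For `n = 1` and a smooth `g : ℝ → ℝ`, the function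
`u(x,t) = (e^{-t/2}/2) ∫_{x-t}^{x+t} I_0((1/2)√(t² − (x−y)²)) g(y) dy` is smooth on
`ℝ × (0,∞)`, satisfies the damped wave equation `∂²u/∂t² − ∂²u/∂x² + ∂u/∂t = 0` there,
and `u(x,t) → 0`, `∂u/∂t(x,t) → g(x)` as `t → 0⁺`. -/
theorem damped_wave_solution_dim_one (g : ℝ → ℝ) (hg : ContDiff ℝ (⊤ : ℕ∞) g)
    (u : ℝ → ℝ → ℝ)
    (hu : ∀ x t : ℝ, 0 < t →
      u x t = (exp (-t / 2) / 2) *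
        ∫ y in (x - t)..(x + t), besselI 0 ((1 / 2) * Real.sqrt (t ^ 2 - (x - y) ^ 2)) * g y) :
    ContDiffOn ℝ (⊤ : ℕ∞) (fun p : ℝ × ℝ => u p.1 p.2) (univ ×ˢ Ioi 0) ∧
    (∀ x t : ℝ, 0 < t →
      deriv (deriv (fun s => u x s)) t - deriv (deriv (fun z => u z t)) x
        + deriv (fun s => u x s) t = 0) ∧
    (∀ x : ℝ,
      Tendsto (fun t => u x t) (𝓝[>] 0) (𝓝 0) ∧
      Tendsto (fun t => deriv (fun s => u x s) t) (𝓝[>] 0) (𝓝 (g x))) :=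
  damped_wave_solution_dim_one_general le_top g hg u hu
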